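/- The edge set ⋃_{d ∈ {2,5}} (E₀₁(d) ∪ E₁₂(d) ∪ E₂₀(d)) can be partitioned into 2 edge-disjoint C₇-factors of the complete tripartite graph K_{7,7,7}. -/

import Mathlib

open SimpleGraph

/-- `F` is an `H`-factor (of the complete graph on its vertex type, or of any graph
containing it): every connected component of `F`, viewed as an induced subgraph,
is isomorphic to `H`.  Since `F` is a graph on all of `V`, it is automatically spanning. -/
def IsHFactor {V W : Type*} (H : SimpleGraph W) (F : SimpleGraph V) : Prop :=
  ∀ c : F.ConnectedComponent, Nonempty (F.induce c.supp ≃g H)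

/-- A `C_k`-factor: a spanning subgraph each of whose connected components is a
cycle of length `k` (in particular it is 2-regular). -/
def IsCycleFactor {V : Type*} (k : ℕ) (F : SimpleGraph V) : Prop :=
  IsHFactor (SimpleGraph.cycleGraph k) F

/-- `(G; C_m^r, C_k^s)`: a partition of the edge set of `G` into `r` `C_m`-factors
and `s` `C_k`-factors. -/
def IsCycleDecomp {V : Type*} (G : SimpleGraph V) (m k r s : ℕ) : Prop :=
  ∃ F : Fin r ⊕ Fin s → SimpleGraph V,
    (∀ i, F i ≤ G) ∧
    (∀ e ∈ G.edgeSet, ∃! i, e ∈ (F i).edgeSet) ∧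
    (∀ i : Fin r, IsCycleFactor m (F (Sum.inl i))) ∧
    (∀ j : Fin s, IsCycleFactor k (F (Sum.inr j)))

/-- The complete tripartite graph `K_{7,7,7}` on vertex set `Z₇ × Z₃`, with the three
partite sets `V_i = Z₇ × {i}` for `i ∈ Z₃` (the vertex `j_i` is the pair `(j, i)`). -/
def K777 : SimpleGraph (ZMod 7 × ZMod 3) where
  Adj x y := x.2 ≠ y.2
  symm := ⟨fun _ _ h => h.symm⟩
  loopless := ⟨fun _ h => h rfl⟩

/-- The edge set `E_{ij}(d) = {{l_i, (l+d)_j} : l ∈ Z₇}`. -/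
def Eij (i j : ZMod 3) (d : ZMod 7) : Set (Sym2 (ZMod 7 × ZMod 3)) :=
  {e | ∃ l : ZMod 7, e = s((l, i), (l + d, j))}

/-- The twisted graph: go round `Z₇` in steps of `2`, keeping `i - p j` constant. -/
def twist (p : ZMod 7 → ZMod 3) : SimpleGraph (ZMod 7 × ZMod 3) where
  Adj x y := x.2 - p x.1 = y.2 - p y.1 ∧ (y.1 = x.1 + 2 ∨ x.1 = y.1 + 2)
  symm := ⟨fun _ _ h => ⟨h.1.symm, h.2.symm⟩⟩
  loopless := ⟨fun x h => by
    have h2 : ∀ a : ZMod 7, ¬ (a = a + 2 ∨ a = a + 2) := by decide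
    exact h2 _ h.2⟩

instance (p : ZMod 7 → ZMod 3) : DecidableRel (twist p).Adj := fun x y =>
  inferInstanceAs (Decidable (x.2 - p x.1 = y.2 - p y.1 ∧ (y.1 = x.1 + 2 ∨ x.1 = y.1 + 2)))

lemma twist_inv (p : ZMod 7 → ZMod 3) {x y} (h : (twist p).Reachable x y) :
    x.2 - p x.1 = y.2 - p y.1 := by
  obtain ⟨w⟩ := h
  induction w with
  | nil => rfl
  | cons h _ ih => exact h.1.trans ih

lemma twist_reach (p : ZMod 7 → ZMod 3) (c : ZMod 3) (a : ZMod 7) (n : ℕ) :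
    (twist p).Reachable (a, p a + c) (a + 2 * n, p (a + 2 * n) + c) := by
  induction n with
  | zero => simp
  | succ n ih =>
    refine ih.trans (Adj.reachable ⟨by simp, Or.inl ?_⟩)
    push_cast
    ring

lemma twist_reach_iff (p : ZMod 7 → ZMod 3) (x y : ZMod 7 × ZMod 3) :
    (twist p).Reachable x y ↔ x.2 - p x.1 = y.2 - p y.1 := by
  refine ⟨twist_inv p, fun h => ?_⟩
  have hs : ∀ a b : ZMod 7, ∃ n : Fin 7, b = a + 2 * ((n : ℕ) : ZMod 7) := by decide
  obtain ⟨n, hn⟩ := hs x.1 y.1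
  have := twist_reach p (x.2 - p x.1) x.1 n
  rw [← hn] at this
  have hx : x = (x.1, p x.1 + (x.2 - p x.1)) := by ext <;> simp
  have hy : y = (y.1, p y.1 + (x.2 - p x.1)) := by ext <;> simp [h]
  rw [hx, hy]
  exact this

lemma twist_factor (p : ZMod 7 → ZMod 3) : IsCycleFactor 7 (twist p) := by
  intro c
  induction c using ConnectedComponent.ind with
  | _ v =>
  have hmem : ∀ w, w ∈ ((twist p).connectedComponentMk v).supp ↔
      w.2 - p w.1 = v.2 - p v.1 := by
    intro w
    rw [ConnectedComponent.mem_supp_iff, ConnectedComponent.eq, twist_reach_iff]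
  have h8 : ∀ a : ZMod 7, 2 * (4 * a) = a := by decide
  have h8' : ∀ a : ZMod 7, 4 * (2 * a) = a := by decide
  have hadj : ∀ a b : ZMod 7, (cycleGraph 7).Adj (4 * a : ZMod 7) (4 * b : ZMod 7) ↔
      (b = a + 2 ∨ a = b + 2) := by
    have h : ∀ a b : ZMod 7, ((4 * a - 4 * b = 1) ∨ (4 * b - 4 * a = 1)) ↔
      (b = a + 2 ∨ a = b + 2) := by decide
    intro a b
    exact (cycleGraph_adj (n := 5)).trans (h a b)
  refine ⟨⟨⟨fun w => (4 * w.1.1 : ZMod 7),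
    fun k : ZMod 7 => ⟨(2 * k, p (2 * k) + (v.2 - p v.1)), (hmem _).2 (by simp)⟩, ?_, ?_⟩, ?_⟩⟩
  · rintro ⟨w, hw⟩
    have := (hmem w).1 hw
    apply Subtype.ext
    ext
    · simp [h8]
    · simp [h8, ← this]
  · intro k
    exact h8' k
  · rintro ⟨a, ha⟩ ⟨b, hb⟩
    have e := ((hmem a).1 ha).trans ((hmem b).1 hb).symm
    refine (hadj a.1 b.1).trans ?_
    exact ⟨fun h => ⟨e, h⟩, fun h => h.2⟩

/-- The offsets of the first factor; the second uses their negatives. -/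
def offs : ZMod 7 → ZMod 3 := ![0, 1, 1, 2, 2, 1, 0]

/-- Lemma 2.4: the edges of `⋃_{d ∈ {2,5}} (E₀₁(d) ∪ E₁₂(d) ∪ E₂₀(d))` can be
decomposed into two edge-disjoint `C₇`-factors of `K_{7,7,7}`. -/
theorem two_heptagon_factors_2_5 :
    ∃ F₁ F₂ : SimpleGraph (ZMod 7 × ZMod 3),
      F₁ ≤ K777 ∧ F₂ ≤ K777 ∧
      IsCycleFactor 7 F₁ ∧ IsCycleFactor 7 F₂ ∧
      Disjoint F₁.edgeSet F₂.edgeSet ∧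
      F₁.edgeSet ∪ F₂.edgeSet =
        ⋃ d ∈ ({2, 5} : Set (ZMod 7)), (Eij 0 1 d ∪ Eij 1 2 d ∪ Eij 2 0 d) := by
  refine ⟨twist offs, twist (fun j => - offs j), ?_, ?_, twist_factor _, twist_factor _, ?_, ?_⟩
  · have h : ∀ x y, (twist offs).Adj x y → x.2 ≠ y.2 := by decide +kernel
    exact fun x y hxy => h x y hxy
  · have h : ∀ x y, (twist (fun j => - offs j)).Adj x y → x.2 ≠ y.2 := by decide +kernel
    exact fun x y hxy => h x y hxy
  · have h : ∀ x y, (twist offs).Adj x y → ¬ (twist (fun j => - offs j)).Adj x y := by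
      decide +kernel
    rw [Set.disjoint_left]
    intro e
    induction e using Sym2.ind with
    | _ x y => exact h x y
  · have h : ∀ x y : ZMod 7 × ZMod 3,
        ((twist offs).Adj x y ∨ (twist (fun j => - offs j)).Adj x y) ↔
        ∃ d : ZMod 7, (d = 2 ∨ d = 5) ∧
          (((∃ l : ZMod 7, s(x, y) = s((l, 0), (l + d, 1))) ∨
            (∃ l : ZMod 7, s(x, y) = s((l, 1), (l + d, 2)))) ∨
            (∃ l : ZMod 7, s(x, y) = s((l, 2), (l + d, 0)))) := by
      decide +kernel
    ext e
    induction e using Sym2.ind with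
    | _ x y =>
      simp only [Set.mem_iUnion, exists_prop]
      exact h x y
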